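/- For all x > 0, one has (1/2)·ln(x² + x + 1/3) − (γ − (1/2)·ln 3) < ψ(x+1) < (1/2)·ln(x² + x + 1/3), and the constant γ − (1/2)·ln 3 in the lower bound is best possible. -/

import Mathlib

open Real Filter Set

/-- The digamma function ψ(x) = Γ'(x)/Γ(x), as the derivative of log ∘ Γ. -/
noncomputable def digamma (x : ℝ) : ℝ := deriv (fun y : ℝ => Real.log (Real.Gamma y)) x

/-- L(x,a) = (1/(90a²+2))·ln(x²+x+(3a+1)/3) + (45a²/(90a²+2))·ln(x²+x+(15a−1)/(45a)). -/
noncomputable def L (x a : ℝ) : ℝ :=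
  (1 / (90 * a ^ 2 + 2)) * Real.log (x ^ 2 + x + (3 * a + 1) / 3) +
    (45 * a ^ 2 / (90 * a ^ 2 + 2)) * Real.log (x ^ 2 + x + (15 * a - 1) / (45 * a))

lemma lg_diff {x : ℝ} (hx : 0 < x) :
    DifferentiableAt ℝ (fun y : ℝ => Real.log (Real.Gamma y)) x := by
  have h : DifferentiableAt ℝ Real.Gamma x := by
    apply Real.differentiableAt_Gamma
    intro m hm
    have : (0 : ℝ) ≤ m := Nat.cast_nonneg m
    linarith
  exact h.log (Real.Gamma_pos_of_pos hx).ne'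

lemma lg_feq {y : ℝ} (hy : 0 < y) :
    Real.log (Real.Gamma (y + 1)) = Real.log y + Real.log (Real.Gamma y) := by
  rw [Real.Gamma_add_one hy.ne', Real.log_mul hy.ne' (Real.Gamma_pos_of_pos hy).ne']

lemma dg_feq {x : ℝ} (hx : 0 < x) : digamma (x + 1) = digamma x + 1 / x := by
  unfold digamma
  have h1 : HasDerivAt (fun y : ℝ => Real.log (Real.Gamma (y + 1)))
      (deriv (fun y : ℝ => Real.log (Real.Gamma y)) (x + 1)) x :=
    (lg_diff (by linarith : 0 < x + 1)).hasDerivAt.comp_add_const x 1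
  have h2 : HasDerivAt (fun y : ℝ => Real.log y + Real.log (Real.Gamma y))
      (x⁻¹ + deriv (fun y : ℝ => Real.log (Real.Gamma y)) x) x :=
    (Real.hasDerivAt_log hx.ne').add (lg_diff hx).hasDerivAt
  have h3 := h2.congr_of_eventuallyEq (f₁ := fun y : ℝ => Real.log (Real.Gamma (y + 1)))
    (by filter_upwards [lt_mem_nhds hx] with y hy using lg_feq hy)
  rw [h1.unique h3, one_div, add_comm]

lemma dg_le {x : ℝ} (hx : 0 < x) : digamma x ≤ Real.log x := by
  have h := Real.convexOn_log_Gamma.deriv_le_slope (x := x) (y := x + 1) hx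
    (show 0 < x + 1 by linarith) (by linarith) (lg_diff hx)
  have e : slope (Real.log ∘ Real.Gamma) x (x + 1) = Real.log x := by
    simp [slope_def_field, lg_feq hx]
  rw [e] at h
  exact h

lemma dg_ge {x : ℝ} (hx : 0 < x) : Real.log x ≤ digamma (x + 1) := by
  have h := Real.convexOn_log_Gamma.slope_le_deriv (x := x) (y := x + 1) hx
    (show 0 < x + 1 by linarith) (by linarith) (lg_diff (by linarith))
  have e : slope (Real.log ∘ Real.Gamma) x (x + 1) = Real.log x := by
    simp [slope_def_field, lg_feq hx]
  rw [e] at h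
  exact h

lemma dg_one : digamma 1 = - Real.eulerMascheroniConstant := by
  have := (Real.hasDerivAt_Gamma_one.log (by simp)).deriv
  simpa [digamma] using this

/-- The difference to be studied. -/
noncomputable def DD (x : ℝ) : ℝ := (1 / 2) * Real.log (x ^ 2 + x + 1 / 3) - digamma (x + 1)

lemma DD_step {x y : ℝ} (hx : 0 ≤ x) (hxy : x < y) :
    DD (x + 1) - DD (y + 1) < DD x - DD y := by
  let h : ℝ → ℝ := fun t => (1 / 2) * Real.log (t ^ 2 - t + 1 / 3)
    - (1 / 2) * Real.log (t ^ 2 + t + 1 / 3) + t⁻¹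
  have hp : ∀ t : ℝ, 0 < t ^ 2 - t + 1 / 3 := fun t => by nlinarith [sq_nonneg (t - 1 / 2)]
  have hq : ∀ t : ℝ, 0 < t ^ 2 + t + 1 / 3 := fun t => by nlinarith [sq_nonneg (t + 1 / 2)]
  have hd : ∀ t : ℝ, 0 < t → HasDerivAt h ((1 / 2) * ((2 * t - 1) / (t ^ 2 - t + 1 / 3))
      - (1 / 2) * ((2 * t + 1) / (t ^ 2 + t + 1 / 3)) + -(t ^ 2)⁻¹) t := by
    intro t ht
    have a1 : HasDerivAt (fun t : ℝ => t ^ 2 - t + 1 / 3) (2 * t - 1) t := by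
      simpa using (((hasDerivAt_id t).pow 2).sub (hasDerivAt_id t)).add_const (1 / 3 : ℝ)
    have a2 : HasDerivAt (fun t : ℝ => t ^ 2 + t + 1 / 3) (2 * t + 1) t := by
      simpa using (((hasDerivAt_id t).pow 2).add (hasDerivAt_id t)).add_const (1 / 3 : ℝ)
    exact (((a1.log (hp t).ne').const_mul (1 / 2)).sub
      ((a2.log (hq t).ne').const_mul (1 / 2))).add (hasDerivAt_inv ht.ne')
  have hanti : StrictAntiOn h (Ioi 0) := by
    apply strictAntiOn_of_deriv_neg (convex_Ioi 0)
    · intro t ht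
      exact (hd t ht).continuousAt.continuousWithinAt
    · intro t ht
      rw [interior_Ioi] at ht
      have ht : 0 < t := ht
      rw [(hd t ht).deriv]
      have p := hp t
      have q := hq t
      have e : (1 / 2) * ((2 * t - 1) / (t ^ 2 - t + 1 / 3))
        - (1 / 2) * ((2 * t + 1) / (t ^ 2 + t + 1 / 3)) + -(t ^ 2)⁻¹
        = -(1 / 9) / ((t ^ 2 - t + 1 / 3) * (t ^ 2 + t + 1 / 3) * t ^ 2) := by
        rw [eq_div_iff (by positivity)]
        generalize hP : t ^ 2 - t + 1 / 3 = P at *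
        generalize hQ : t ^ 2 + t + 1 / 3 = Q at *
        have : ((1 / 2) * ((2 * t - 1) / P) - (1 / 2) * ((2 * t + 1) / Q) + -(t ^ 2)⁻¹)
            * (P * Q * t ^ 2) = (1 / 2) * (2 * t - 1) * Q * t ^ 2
              - (1 / 2) * (2 * t + 1) * P * t ^ 2 - P * Q := by
          field_simp
          ring
        rw [this, ← hP, ← hQ]
        ring
      rw [e]
      exact div_neg_of_neg_of_pos (by norm_num) (by positivity)
  have key := hanti (show x + 1 ∈ Ioi (0 : ℝ) from by simp only [mem_Ioi]; linarith)
    (show y + 1 ∈ Ioi (0 : ℝ) from by simp only [mem_Ioi]; linarith) (by linarith)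
  have hh : ∀ z : ℝ, 0 ≤ z → DD z - DD (z + 1) = h (z + 1) := by
    intro z hz
    have e1 : (z + 1) ^ 2 - (z + 1) + 1 / 3 = z ^ 2 + z + 1 / 3 := by ring
    simp only [DD, h]
    rw [dg_feq (show 0 < z + 1 by linarith), e1, one_div (z + 1)]
    ring
  have := hh x hx
  have := hh y (by linarith)
  linarith

lemma DD_tendsto : Tendsto DD atTop (nhds 0) := by
  have hinv : Tendsto (fun x : ℝ => x⁻¹) atTop (nhds 0) := tendsto_inv_atTop_zero
  have lo : Tendsto (fun x : ℝ => -x⁻¹) atTop (nhds 0) := by simpa using hinv.neg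
  refine tendsto_of_tendsto_of_tendsto_of_le_of_le' lo hinv ?_ ?_
  · filter_upwards [eventually_gt_atTop 0] with x hx
    have h1 := dg_le (show 0 < x + 1 by linarith)
    have h2 : Real.log (x ^ 2) ≤ Real.log (x ^ 2 + x + 1 / 3) :=
      Real.log_le_log (by positivity) (by linarith)
    have h3 : Real.log (x + 1) - Real.log x ≤ x⁻¹ := by
      rw [← Real.log_div (by linarith) hx.ne']
      have := Real.log_le_sub_one_of_pos (show 0 < (x + 1) / x by positivity)
      have e : (x + 1) / x - 1 = x⁻¹ := by field_simp; ring
      linarith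
    rw [Real.log_pow] at h2
    push_cast at h2
    unfold DD
    linarith
  · filter_upwards [eventually_gt_atTop 0] with x hx
    have h1 := dg_ge hx
    have h2 : Real.log (x ^ 2 + x + 1 / 3) ≤ Real.log ((x + 1) ^ 2) :=
      Real.log_le_log (by positivity) (by nlinarith)
    have h3 : Real.log (x + 1) - Real.log x ≤ x⁻¹ := by
      rw [← Real.log_div (by linarith) hx.ne']
      have := Real.log_le_sub_one_of_pos (show 0 < (x + 1) / x by positivity)
      have e : (x + 1) / x - 1 = x⁻¹ := by field_simp; ring
      linarith
    rw [Real.log_pow] at h2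
    push_cast at h2
    unfold DD
    linarith

lemma DD_anti {x y : ℝ} (hx : 0 ≤ x) (hxy : x < y) : DD y < DD x := by
  let u : ℕ → ℝ := fun n => DD (x + n) - DD (y + n)
  have hu : StrictAnti u := by
    apply strictAnti_nat_of_succ_lt
    intro n
    have hn : (0 : ℝ) ≤ n := Nat.cast_nonneg n
    have := DD_step (show 0 ≤ x + n by linarith) (show x + n < y + n by linarith)
    simp only [u, Nat.cast_add, Nat.cast_one, ← add_assoc]
    exact this
  have ht : ∀ z : ℝ, Tendsto (fun n : ℕ => DD (z + n)) atTop (nhds 0) := fun z =>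
    DD_tendsto.comp (tendsto_atTop_add_const_left _ z tendsto_natCast_atTop_atTop)
  have hl : Tendsto u atTop (nhds 0) := by simpa using (ht x).sub (ht y)
  have h1 : 0 ≤ u 1 := hu.antitone.le_of_tendsto hl 1
  have h0 : u 1 < u 0 := hu (by norm_num)
  have : u 0 = DD x - DD y := by simp [u]
  linarith

lemma DD_pos {x : ℝ} (hx : 0 ≤ x) : 0 < DD x := by
  have h1 : DD (x + 1) < DD x := DD_anti hx (by linarith)
  have h2 : 0 ≤ DD (x + 1) := by
    refine le_of_tendsto DD_tendsto ?_
    filter_upwards [eventually_gt_atTop (x + 1)] with z hz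
    exact (DD_anti (by linarith) hz).le
  linarith

lemma DD_zero : DD 0 = Real.eulerMascheroniConstant - (1 / 2) * Real.log 3 := by
  have : Real.log (1 / 3) = - Real.log 3 := by rw [one_div, Real.log_inv]
  unfold DD
  norm_num [dg_one]
  linarith

/-- For x > 0, (1/2)ln(x²+x+1/3) − (γ − (1/2)ln 3) < ψ(x+1) < (1/2)ln(x²+x+1/3), and the
constant γ − (1/2)ln 3 in the lower bound is best possible. -/
theorem stmt_12 :
    (∀ x : ℝ, 0 < x →
      (1 / 2) * Real.log (x ^ 2 + x + 1 / 3) -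
          (Real.eulerMascheroniConstant - (1 / 2) * Real.log 3) < digamma (x + 1) ∧
        digamma (x + 1) < (1 / 2) * Real.log (x ^ 2 + x + 1 / 3)) ∧
    (∀ c : ℝ, (∀ x : ℝ, 0 < x → (1 / 2) * Real.log (x ^ 2 + x + 1 / 3) - c < digamma (x + 1)) →
      Real.eulerMascheroniConstant - (1 / 2) * Real.log 3 ≤ c) := by
  refine ⟨fun x hx => ?_, fun c hc => ?_⟩
  · have h1 := DD_anti le_rfl hx
    have h2 := DD_pos hx.le
    rw [DD_zero] at h1
    unfold DD at h1 h2
    constructor <;> linarith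
  · have hs : Tendsto (slope (fun y : ℝ => Real.log (Real.Gamma y)) 1) (nhdsWithin 1 (Ioi 1))
        (nhds (digamma 1)) :=
      ((hasDerivAt_iff_tendsto_slope.1 (lg_diff one_pos).hasDerivAt)).mono_left
        (nhdsWithin_mono _ (fun z hz => (ne_of_gt hz)))
    have hb : (1 / 2) * Real.log (1 / 3) - c ≤ digamma 1 := by
      refine ge_of_tendsto hs ?_
      filter_upwards [self_mem_nhdsWithin] with z hz
      have hz : 1 < z := hz
      obtain ⟨w, hw, he⟩ := exists_deriv_eq_slope (fun y : ℝ => Real.log (Real.Gamma y)) hz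
        (fun t ht => (lg_diff (by linarith [ht.1])).continuousAt.continuousWithinAt)
        (fun t ht => (lg_diff (by linarith [ht.1])).differentiableWithinAt)
      rw [slope_def_field, ← he]
      have h1 := hc (w - 1) (by linarith [hw.1])
      rw [sub_add_cancel] at h1
      have h2 : Real.log (1 / 3) ≤ Real.log ((w - 1) ^ 2 + (w - 1) + 1 / 3) :=
        Real.log_le_log (by norm_num) (by nlinarith [hw.1])
      change _ ≤ digamma w
      linarith
    rw [dg_one, one_div 3, Real.log_inv] at hb
    linarith
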